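/- Let λ ⊆ ℂ^d × ℂ^d be a positive Lagrangian subspace and suppose its projection λ₁ = { x ∈ ℂ^d : (x,ξ) ∈ λ for some ξ ∈ ℂ^d } equals ℂ^k × {0} ⊆ ℂ^k × ℂ^{d−k} = ℂ^d for some 0 ≤ k ≤ d (write points of ℂ^d × ℂ^d as (x', x'', ξ', ξ'') with x', ξ' ∈ ℂ^k and x'', ξ'' ∈ ℂ^{d−k}). If k = 0 then λ = {0} × ℂ^d. If 1 ≤ k ≤ d then there exists a symmetric matrix Q ∈ ℂ^{k×k} with Im Q positive semidefinite such that λ = { (x', 0, Q x', ξ'') : x' ∈ ℂ^k, ξ'' ∈ ℂ^{d−k} }. -/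

import Mathlib

open Matrix Complex

namespace Stmt1

/-- Bilinear (non-sesquilinear) pairing `⟨u,v⟩ = Σ_j u_j v_j` on `ℂ^d`. -/
noncomputable def pairC {d : ℕ} (u v : Fin d → ℂ) : ℂ := ∑ j, u j * v j

/-- Canonical symplectic form `σ((x,ξ),(x',ξ')) = ⟨x',ξ⟩ − ⟨x,ξ'⟩` on `ℂ^d × ℂ^d`. -/
noncomputable def sform {d : ℕ} (X Y : (Fin d → ℂ) × (Fin d → ℂ)) : ℂ :=
  pairC Y.1 X.2 - pairC X.1 Y.2

/-- A complex subspace `λ ⊆ ℂ^d × ℂ^d` is Lagrangian if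
`λ = { X : σ(X,Y) = 0 for all Y ∈ λ }`. -/
def IsLagrangian {d : ℕ} (lam : Submodule ℂ ((Fin d → ℂ) × (Fin d → ℂ))) : Prop :=
  ∀ X, X ∈ lam ↔ ∀ Y ∈ lam, sform X Y = 0

/-- A Lagrangian is positive if `i σ(X̄, X)` is a nonnegative real number for all `X ∈ λ`,
where `X̄` is the entrywise complex conjugate. -/
def IsPositive {d : ℕ} (lam : Submodule ℂ ((Fin d → ℂ) × (Fin d → ℂ))) : Prop :=
  ∀ X ∈ lam, ∃ r : ℝ, 0 ≤ r ∧
    Complex.I * sform (fun j => starRingEnd ℂ (X.1 j), fun j => starRingEnd ℂ (X.2 j)) X = r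

theorem pairC_restrict {d k : ℕ} (hk : k ≤ d) (u v : Fin d → ℂ)
    (hu : ∀ j : Fin d, k ≤ (j : ℕ) → u j = 0) :
    pairC u v = ∑ i : Fin k, u (Fin.castLE hk i) * v (Fin.castLE hk i) := by
  unfold pairC
  symm
  have h := Finset.sum_map (Finset.univ : Finset (Fin k)) (Fin.castLEEmb hk)
    (fun j => u j * v j)
  simp only [Fin.coe_castLEEmb] at h
  rw [← h]
  apply Finset.sum_subset (Finset.subset_univ _)
  intro j _ hj
  rw [hu j, zero_mul]
  by_contra hlt
  apply hj
  rw [Finset.mem_map]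
  exact ⟨⟨j, by omega⟩, Finset.mem_univ _, by ext; simp⟩

theorem pairC_single {d : ℕ} (a : Fin d) (v : Fin d → ℂ) :
    pairC (Pi.single a 1) v = v a := by
  unfold pairC
  simp [Pi.single_apply]

theorem main_aux (d k : ℕ) (hk : k ≤ d)
    (lam : Submodule ℂ ((Fin d → ℂ) × (Fin d → ℂ)))
    (hLag : IsLagrangian lam) (hPos : IsPositive lam)
    (hproj : {x : Fin d → ℂ | ∃ ξ : Fin d → ℂ, (x, ξ) ∈ lam}
      = {x : Fin d → ℂ | ∀ j : Fin d, k ≤ (j : ℕ) → x j = 0}) :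
    ∃ Q : Matrix (Fin k) (Fin k) ℂ, Q.IsSymm ∧
      (Q.map Complex.im).PosSemidef ∧
      ∀ X : (Fin d → ℂ) × (Fin d → ℂ), X ∈ lam ↔
        ((∀ j : Fin d, k ≤ (j : ℕ) → X.1 j = 0) ∧
         ∀ j : Fin d, (h : (j : ℕ) < k) →
           X.2 j = ∑ i : Fin k, Q ⟨(j : ℕ), h⟩ i * X.1 (Fin.castLE hk i)) := by
  have hex : ∀ i : Fin k, ∃ ξ : Fin d → ℂ,
      ((Pi.single (Fin.castLE hk i) 1 : Fin d → ℂ), ξ) ∈ lam := by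
    intro i
    have : (Pi.single (Fin.castLE hk i) 1 : Fin d → ℂ) ∈
        {x : Fin d → ℂ | ∀ j : Fin d, k ≤ (j : ℕ) → x j = 0} := by
      intro j hj
      apply Pi.single_eq_of_ne
      intro h
      have := i.2
      rw [h] at hj
      simp at hj
      omega
    rw [← hproj] at this
    exact this
  choose η hη using hex
  have hvan : ∀ X ∈ lam, ∀ j : Fin d, k ≤ (j : ℕ) → X.1 j = 0 := by
    intro X hX
    have : X.1 ∈ {x : Fin d → ℂ | ∃ ξ : Fin d → ℂ, (x, ξ) ∈ lam} := ⟨X.2, hX⟩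
    rw [hproj] at this
    exact this
  let Q : Matrix (Fin k) (Fin k) ℂ := Matrix.of fun j i => η j (Fin.castLE hk i)
  have hsymm : ∀ i j, Q i j = Q j i := by
    intro i j
    have h := (hLag _).1 (hη i) _ (hη j)
    simp only [sform, pairC_single] at h
    exact sub_eq_zero.1 h
  have hfwd : ∀ X ∈ lam, ∀ j : Fin k,
      X.2 (Fin.castLE hk j) = ∑ i : Fin k, Q j i * X.1 (Fin.castLE hk i) := by
    intro X hX j
    have h := (hLag _).1 hX _ (hη j)
    simp only [sform, pairC_single] at h
    rw [sub_eq_zero.1 h, pairC_restrict hk _ _ (hvan X hX)]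
    exact Finset.sum_congr rfl fun i _ => mul_comm _ _
  have hbwd : ∀ X : (Fin d → ℂ) × (Fin d → ℂ), (∀ j : Fin d, k ≤ (j : ℕ) → X.1 j = 0) →
      (∀ j : Fin k, X.2 (Fin.castLE hk j) = ∑ i : Fin k, Q j i * X.1 (Fin.castLE hk i)) →
      X ∈ lam := by
    intro X h1 h2
    rw [hLag]
    intro Y hY
    unfold sform
    rw [pairC_restrict hk _ _ (hvan Y hY), pairC_restrict hk _ _ h1, sub_eq_zero]
    simp only [h2, hfwd Y hY, Finset.mul_sum]
    rw [Finset.sum_comm]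
    refine Finset.sum_congr rfl fun i _ => Finset.sum_congr rfl fun j _ => ?_
    rw [hsymm i j]
    ring
  refine ⟨Q, ?_, ?_, ?_⟩
  · ext i j
    exact hsymm j i
  · apply Matrix.PosSemidef.of_dotProduct_mulVec_nonneg
    · ext i j
      simp [hsymm i j]
    · intro x
      let u : Fin d → ℂ := fun j => if h : (j : ℕ) < k then (x ⟨j, h⟩ : ℂ) else 0
      let v : Fin d → ℂ := fun j =>
        if h : (j : ℕ) < k then ∑ i : Fin k, Q ⟨j, h⟩ i * (x i : ℂ) else 0
      have hu : ∀ j : Fin d, k ≤ (j : ℕ) → u j = 0 := by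
        intro j hj
        simp [u, not_lt.2 hj]
      have hu' : ∀ i : Fin k, u (Fin.castLE hk i) = (x i : ℂ) := by
        intro i; simp [u]
      have hv' : ∀ j : Fin k, v (Fin.castLE hk j) = ∑ i : Fin k, Q j i * (x i : ℂ) := by
        intro i; simp [v]
      have hmem : (u, v) ∈ lam := hbwd (u, v) hu (by
        intro j
        simp only [hu', hv'])
      obtain ⟨r, hr, he⟩ := hPos _ hmem
      unfold sform at he
      rw [pairC_restrict hk _ _ hu, pairC_restrict hk _ _
        (fun j hj => by simp [hu j hj])] at he
      simp only [hu', hv', Complex.conj_ofReal] at he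
      have h2 := congrArg Complex.re he
      simp only [Complex.mul_re, Complex.I_re, Complex.I_im, Complex.sub_im, Complex.im_sum,
        Complex.mul_im, Complex.ofReal_re, Complex.ofReal_im, Complex.conj_im,
        Complex.conj_re, zero_mul, mul_zero, add_zero, zero_add, one_mul, zero_sub] at h2
      simp only [mul_neg, Finset.sum_neg_distrib] at h2
      simp only [dotProduct, mulVec, Matrix.map_apply, star_trivial]
      linarith
  · intro X
    constructor
    · intro hX
      exact ⟨hvan X hX, fun j h => hfwd X hX ⟨j, h⟩⟩
    · rintro ⟨h1, h2⟩
      exact hbwd X h1 fun j => h2 (Fin.castLE hk j) j.2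

/-- Lemma `lagrangianpure`.  Let `λ ⊆ ℂ^d × ℂ^d` be a positive Lagrangian
whose projection on the first factor equals `ℂ^k × {0}` (i.e. it consists exactly of the
vectors vanishing in coordinates `≥ k`), with `0 ≤ k ≤ d`.  If `k = 0` then
`λ = {0} × ℂ^d`; if `1 ≤ k` then there is a symmetric `Q ∈ ℂ^{k×k}` with `Im Q`
positive semidefinite such that `λ = { (x',0,Qx',ξ'') : x' ∈ ℂ^k, ξ'' ∈ ℂ^{d−k} }`. -/
theorem stmt_1 (d k : ℕ) (hk : k ≤ d)
    (lam : Submodule ℂ ((Fin d → ℂ) × (Fin d → ℂ)))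
    (hLag : IsLagrangian lam) (hPos : IsPositive lam)
    (hproj : {x : Fin d → ℂ | ∃ ξ : Fin d → ℂ, (x, ξ) ∈ lam}
      = {x : Fin d → ℂ | ∀ j : Fin d, k ≤ (j : ℕ) → x j = 0}) :
    (k = 0 → ∀ X : (Fin d → ℂ) × (Fin d → ℂ), X ∈ lam ↔ X.1 = 0) ∧
    (1 ≤ k → ∃ Q : Matrix (Fin k) (Fin k) ℂ, Q.IsSymm ∧
      (Q.map Complex.im).PosSemidef ∧
      ∀ X : (Fin d → ℂ) × (Fin d → ℂ), X ∈ lam ↔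
        ((∀ j : Fin d, k ≤ (j : ℕ) → X.1 j = 0) ∧
         ∀ j : Fin d, (h : (j : ℕ) < k) →
           X.2 j = ∑ i : Fin k, Q ⟨(j : ℕ), h⟩ i * X.1 (Fin.castLE hk i))) := by
  obtain ⟨Q, h1, h2, h3⟩ := main_aux d k hk lam hLag hPos hproj
  refine ⟨?_, fun _ => ⟨Q, h1, h2, h3⟩⟩
  intro hk0 X
  rw [h3 X]
  constructor
  · intro h
    funext j
    exact h.1 j (by omega)
  · intro h
    exact ⟨fun j _ => by rw [h]; rfl, fun j hj => by omega⟩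

end Stmt1
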